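/- (Theorem 4.1(i), weak duality for the Mond–Weir robust dual.) Let z ∈ F and let (y, y*, μ) be feasible for the Mond–Weir robust dual (with respect to the subdifferential data S, T). If (f,g) is type I pseudo convex at y, then f(z) − f(y) ∉ −int K. -/

import Mathlib

/-!
Pair the dual equation `0 = v' + ∑ i, μ i • u' i` with `z - y`. Wherever `0 < μ i`, dual feasibility
makes `g i y` nonnegative at its worst-case scenarios, so `g i z u ≤ 0 ≤ g i y u` there and the
corresponding subgradients are nonpositive on `z - y`. This inequality cuts out a weak*-closed
half-space, hence survives weak*-closed convex hulls, and the dual equation gives `0 ≤ v' (z - y)`.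
On the other hand `f y - f z ∈ interior K` would give `y' (f z) < y' (f y)`, and then
`v' (z - y) < 0` by pseudo convexity.
-/

open Set

section Functionals

variable {E : Type*} [AddCommGroup E] [Module ℝ E] [TopologicalSpace E]

lemma pos_of_mem_interior_of_nonneg_on [ContinuousAdd E] [ContinuousSMul ℝ E] {s : Set E} {x : E}
    {φ : StrongDual ℝ E} (hφ : φ ≠ 0) (hs : ∀ a ∈ s, 0 ≤ φ a) (hx : x ∈ interior s) :
    0 < φ x := by
  have himage : φ '' interior s ⊆ interior (Ici 0) :=
    interior_maximal (image_subset_iff.2 fun a ha => hs a (interior_subset ha))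
      (φ.isOpenMap_of_ne_zero hφ _ isOpen_interior)
  rw [interior_Ici] at himage
  exact himage (mem_image_of_mem φ hx)

lemma le_of_mem_closure_convexHull {s : Set E} {x : E} {c : ℝ} (φ : StrongDual ℝ E)
    (hs : ∀ a ∈ s, φ a ≤ c) (hx : x ∈ closure (convexHull ℝ s)) : φ x ≤ c :=
  closure_minimal (convexHull_min hs (convex_halfSpace_le φ.isLinear c))
    (isClosed_le φ.continuous continuous_const) hx

end Functionals

/-- Evaluation of weak* functionals at `x`, bundled as a continuous linear map. -/
noncomputable def weakDualEval {Z : Type*} [AddCommGroup Z] [Module ℝ Z] [TopologicalSpace Z]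
    (x : Z) : StrongDual ℝ (WeakDual ℝ Z) :=
  WeakBilin.eval (topDualPairing ℝ Z) x

lemma weakDualEval_apply {Z : Type*} [AddCommGroup Z] [Module ℝ Z] [TopologicalSpace Z]
    (x : Z) (w : WeakDual ℝ Z) : weakDualEval x w = w x :=
  rfl

/-- The dual cone `K⁺` of a set `K`, inside the topological dual. -/
abbrev topDualCone {Y : Type*} [AddCommGroup Y] [Module ℝ Y] [TopologicalSpace Y]
    (K : Set Y) : PointedCone ℝ (StrongDual ℝ Y) :=
  PointedCone.dual (topDualPairing ℝ Y).flip K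

/-- The worst-case scenarios: with `h = g i y`, this is the set `𝒰ᵢ(y)` of maximizers. -/
def maximizers {𝒰 : Type*} (h : 𝒰 → ℝ) : Set 𝒰 :=
  {u | ∀ u', h u' ≤ h u}

/-- The subdifferential at `y` that an uncertain constraint `h` contributes to the dual equation:
the weak*-closed convex hull of the subgradients `T y u` over worst-case scenarios `u`. -/
def worstCaseSubdifferential {Z 𝒰 : Type*} [AddCommGroup Z] [Module ℝ Z] [TopologicalSpace Z]
    (h : Z → 𝒰 → ℝ) (T : Z → 𝒰 → Set (WeakDual ℝ Z)) (y : Z) : Set (WeakDual ℝ Z) :=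
  closure (convexHull ℝ (⋃ u ∈ maximizers (h y), T y u))

/-- The robust feasible set `F`. -/
def robustFeasibleSet {ι Z 𝒰 : Type*} (g : ι → Z → 𝒰 → ℝ) : Set Z :=
  {z | ∀ i u, g i z u ≤ 0}

section WorstCase

variable {Z 𝒰 : Type*} [AddCommGroup Z] [Module ℝ Z] [TopologicalSpace Z]
  {h : Z → 𝒰 → ℝ} {T : Z → 𝒰 → Set (WeakDual ℝ Z)} {y z : Z} {w : WeakDual ℝ Z}

lemma apply_sub_nonpos_of_mem_worstCaseSubdifferential
    (hT : ∀ u, h z u ≤ h y u → ∀ w ∈ T y u, w (z - y) ≤ 0)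
    (hzy : ∀ u ∈ maximizers (h y), h z u ≤ h y u) (hw : w ∈ worstCaseSubdifferential h T y) :
    w (z - y) ≤ 0 := by
  refine le_of_mem_closure_convexHull (weakDualEval (z - y)) (fun a ha => ?_) hw
  obtain ⟨u, hu, hau⟩ := mem_iUnion₂.1 ha
  exact hT u (hzy u hu) a hau

lemma mul_apply_sub_nonpos_of_mem_worstCaseSubdifferential {μ : ℝ}
    (hT : ∀ u, h z u ≤ h y u → ∀ w ∈ T y u, w (z - y) ≤ 0) (hz : ∀ u, h z u ≤ 0)
    (hμ : 0 ≤ μ) (hsign : ∀ u ∈ maximizers (h y), 0 ≤ μ * h y u)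
    (hw : w ∈ worstCaseSubdifferential h T y) : μ * w (z - y) ≤ 0 := by
  obtain rfl | hμ_pos := hμ.eq_or_lt
  · rw [zero_mul]
  · have hzy : ∀ u ∈ maximizers (h y), h z u ≤ h y u := fun u hu =>
      (hz u).trans (nonneg_of_mul_nonneg_right (hsign u hu) hμ_pos)
    exact mul_nonpos_of_nonneg_of_nonpos hμ
      (apply_sub_nonpos_of_mem_worstCaseSubdifferential hT hzy hw)

end WorstCase

section WeakDuality

variable {Z Y 𝒰 ι : Type*} [AddCommGroup Z] [Module ℝ Z] [TopologicalSpace Z]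
  [AddCommGroup Y] [Module ℝ Y] [TopologicalSpace Y]

/-- Type I pseudo convexity of `(f, g)` at `y`, relative to the subdifferential data `S`, `T`. -/
structure IsTypeIPseudoConvexAt (K : Set Y) (f : Z → Y) (g : ι → Z → 𝒰 → ℝ)
    (S : Z → StrongDual ℝ Y → Set (WeakDual ℝ Z)) (T : ι → Z → 𝒰 → Set (WeakDual ℝ Z))
    (y : Z) : Prop where
  objective : ∀ z, ∀ w ∈ topDualCone K, w (f z) < w (f y) → ∀ v ∈ S y w, v (z - y) < 0
  constraint : ∀ z u i, g i z u ≤ g i y u → ∀ w ∈ T i y u, w (z - y) ≤ 0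

/-- Feasibility of the triple `(y, y', μ)` for the Mond–Weir robust dual. -/
structure IsMondWeirFeasible [Fintype ι] (K : Set Y) (g : ι → Z → 𝒰 → ℝ)
    (S : Z → StrongDual ℝ Y → Set (WeakDual ℝ Z)) (T : ι → Z → 𝒰 → Set (WeakDual ℝ Z))
    (y : Z) (y' : StrongDual ℝ Y) (μ : ι → ℝ) : Prop where
  mem_topDualCone : y' ∈ topDualCone K
  ne_zero : y' ≠ 0
  multiplier_nonneg : ∀ i, 0 ≤ μ i
  stationary : ∃ v' ∈ S y y', ∃ u' : ι → WeakDual ℝ Z,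
    (∀ i, u' i ∈ worstCaseSubdifferential (g i) (T i) y) ∧ 0 = v' + ∑ i, μ i • u' i
  mul_constraint_nonneg : ∀ i, ∀ u ∈ maximizers (g i y), 0 ≤ μ i * g i y u

variable [Fintype ι] {K : Set Y} {f : Z → Y} {g : ι → Z → 𝒰 → ℝ}
  {S : Z → StrongDual ℝ Y → Set (WeakDual ℝ Z)} {T : ι → Z → 𝒰 → Set (WeakDual ℝ Z)}
  {y z : Z} {y' : StrongDual ℝ Y} {μ : ι → ℝ}

lemma IsMondWeirFeasible.exists_apply_sub_nonneg (hy : IsMondWeirFeasible K g S T y y' μ)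
    (hT : ∀ u i, g i z u ≤ g i y u → ∀ w ∈ T i y u, w (z - y) ≤ 0)
    (hz : z ∈ robustFeasibleSet g) : ∃ v' ∈ S y y', 0 ≤ v' (z - y) := by
  obtain ⟨v', hv', u', hu', hstationary⟩ := hy.stationary
  refine ⟨v', hv', ?_⟩
  have hpairing : 0 = v' (z - y) + ∑ i, μ i * u' i (z - y) := by
    simpa only [map_zero, map_add, map_sum, map_smul, smul_eq_mul, weakDualEval_apply] using
      congrArg (weakDualEval (z - y)) hstationary
  have hsum : ∑ i, μ i * u' i (z - y) ≤ 0 := Finset.sum_nonpos fun i _ =>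
    mul_apply_sub_nonpos_of_mem_worstCaseSubdifferential (fun u => hT u i) (hz i)
      (hy.multiplier_nonneg i) (hy.mul_constraint_nonneg i) (hu' i)
  linarith

theorem weak_duality_typeI_general [ContinuousAdd Y] [ContinuousSMul ℝ Y]
    (hz : z ∈ robustFeasibleSet g) (hy : IsMondWeirFeasible K g S T y y' μ)
    (hfg : IsTypeIPseudoConvexAt K f g S T y) :
    f z - f y ∉ -interior K := by
  intro hmem
  obtain ⟨v', hv', hv'_nonneg⟩ := hy.exists_apply_sub_nonneg (hfg.constraint z) hz
  have hpos : 0 < y' (f y - f z) := by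
    refine pos_of_mem_interior_of_nonneg_on hy.ne_zero (fun k hk => hy.mem_topDualCone hk) ?_
    rwa [mem_neg, neg_sub] at hmem
  have hlt : y' (f z) < y' (f y) := by rwa [map_sub, sub_pos] at hpos
  exact (hfg.objective z y' hy.mem_topDualCone hlt v' hv').not_ge hv'_nonneg

end WeakDuality

theorem weak_duality_typeI
    {Z Y : Type*} [NormedAddCommGroup Z] [NormedSpace ℝ Z]
    [NormedAddCommGroup Y] [NormedSpace ℝ Y]
    (K : Set Y) (hKconvex : Convex ℝ K)
    (hKcone : ∀ (c : ℝ), 0 < c → ∀ y ∈ K, c • y ∈ K)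
    (hKpointed : K ∩ (-K) = {0})
    {𝒰 : Type*} [Nonempty 𝒰]
    (n : ℕ) (hn : 0 < n)
    (g : Fin n → Z → 𝒰 → ℝ)
    (f : Z → Y)
    -- subdifferential data
    (S : Z → (Y →L[ℝ] ℝ) → Set (WeakDual ℝ Z))
    (T : Fin n → Z → 𝒰 → Set (WeakDual ℝ Z))
    -- a robust feasible point z
    (z : Z) (hzF : ∀ i : Fin n, ∀ u : 𝒰, g i z u ≤ 0)
    (y : Z)
    -- (y, y', μ) is feasible for the Mond-Weir robust dual
    (y' : Y →L[ℝ] ℝ) (hy'K : ∀ k ∈ K, 0 ≤ y' k) (hy'0 : y' ≠ 0)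
    (μ : Fin n → ℝ) (hμ : ∀ i, 0 ≤ μ i)
    (v' : WeakDual ℝ Z) (hv' : v' ∈ S y y')
    (u' : Fin n → WeakDual ℝ Z)
    (hu' : ∀ i, u' i ∈
      closure (convexHull ℝ (⋃ u ∈ {u : 𝒰 | ∀ u', g i y u' ≤ g i y u}, T i y u)))
    (hfeas : (0 : WeakDual ℝ Z) = v' + ∑ i, μ i • u' i)
    (hsign : ∀ i : Fin n, ∀ u : 𝒰, (∀ u', g i y u' ≤ g i y u) → 0 ≤ μ i * g i y u)
    -- (f, g) is type I pseudo convex at y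
    (hpcI_a : ∀ z : Z, ∀ w : Y →L[ℝ] ℝ, (∀ k ∈ K, 0 ≤ w k) →
      w (f z) < w (f y) → ∀ v ∈ S y w, v (z - y) < 0)
    (hpcI_b : ∀ z : Z, ∀ u : 𝒰, ∀ i : Fin n, g i z u ≤ g i y u →
      ∀ w ∈ T i y u, w (z - y) ≤ 0)
 :
    f z - f y ∉ -interior K :=
  weak_duality_typeI_general hzF ⟨hy'K, hy'0, hμ, ⟨v', hv', u', hu', hfeas⟩, hsign⟩
    ⟨hpcI_a, hpcI_b⟩
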